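/- Let V₁ and V₂ be two C₀-semigroups on a complex Hilbert space H. Then V₁ and V₂ are doubly commuting completely nonunitary semigroups of isometries if and only if (V₁, V₂) is a bishift-semigroup, i.e., there exist a Hilbert space F and a unitary Z : H → L²(ℝ₊², F) such that Z V_{1,t} Z* = 𝒮_{1,t}^F and Z V_{2,t} Z* = 𝒮_{2,t}^F for all t ≥ 0. -/

import Mathlib

open MeasureTheory ContinuousLinearMap
open scoped ENNReal NNReal InnerProductSpace ComplexInnerProductSpace

noncomputable section

section SemigroupDefs

variable {G : Type} [NormedAddCommGroup G] [InnerProductSpace ℂ G] [CompleteSpace G]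

/-- A (C₀-) strongly continuous one-parameter semigroup of bounded operators. -/
def IsC0Semigroup (V : ℝ≥0 → G →L[ℂ] G) : Prop :=
  V 0 = 1 ∧ (∀ s t : ℝ≥0, V (s + t) = V s ∘L V t) ∧ ∀ x : G, Continuous fun t : ℝ≥0 => V t x

/-- A C₀-semigroup of isometries. -/
def IsIsometrySemigroup (V : ℝ≥0 → G →L[ℂ] G) : Prop :=
  IsC0Semigroup V ∧ ∀ (t : ℝ≥0) (x : G), ‖V t x‖ = ‖x‖

/-- The closed subspace `L` reduces the semigroup `V`: it is invariant under every `V t`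
and every `(V t)*`. -/
def ReducedBy (V : ℝ≥0 → G →L[ℂ] G) (L : Submodule ℂ G) : Prop :=
  (∀ t : ℝ≥0, ∀ x ∈ L, V t x ∈ L) ∧ ∀ t : ℝ≥0, ∀ x ∈ L, adjoint (V t) x ∈ L

/-- `T` restricts to a unitary operator on the subspace `L`. -/
def RestrictsToUnitaryOn (T : G →L[ℂ] G) (L : Submodule ℂ G) : Prop :=
  (∀ x ∈ L, T x ∈ L) ∧ (∀ x ∈ L, ‖T x‖ = ‖x‖) ∧ ∀ y ∈ L, ∃ x ∈ L, T x = y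

/-- Every `V t` restricts to a unitary operator on the subspace `L`. -/
def IsUnitarySemigroupOn (V : ℝ≥0 → G →L[ℂ] G) (L : Submodule ℂ G) : Prop :=
  ∀ t : ℝ≥0, RestrictsToUnitaryOn (V t) L

/-- A unitary C₀-semigroup: every `V t` is a surjective isometry. -/
def IsUnitarySemigroup (V : ℝ≥0 → G →L[ℂ] G) : Prop :=
  IsC0Semigroup V ∧ ∀ t : ℝ≥0, (∀ x : G, ‖V t x‖ = ‖x‖) ∧ Function.Surjective (V t)

/-- `V` is completely nonunitary on the subspace `K`: there is no nonzero closed subspace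
of `K` reducing `V` on which every `V t` restricts to a unitary. -/
def IsCnuOn (V : ℝ≥0 → G →L[ℂ] G) (K : Submodule ℂ G) : Prop :=
  ∀ L : Submodule ℂ G, IsClosed (L : Set G) → L ≤ K → ReducedBy V L →
    IsUnitarySemigroupOn V L → L = ⊥

/-- A completely nonunitary semigroup. -/
def IsCnu (V : ℝ≥0 → G →L[ℂ] G) : Prop := IsCnuOn V ⊤

/-- Two semigroups commute. -/
def SgCommute (V1 V2 : ℝ≥0 → G →L[ℂ] G) : Prop :=
  ∀ t s : ℝ≥0, V1 t ∘L V2 s = V2 s ∘L V1 t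

/-- Two semigroups doubly commute. -/
def SgDoublyCommute (V1 V2 : ℝ≥0 → G →L[ℂ] G) : Prop :=
  SgCommute V1 V2 ∧ ∀ t s : ℝ≥0, V1 t ∘L adjoint (V2 s) = adjoint (V2 s) ∘L V1 t

/-- A completely nonunitary pair of semigroups: no nonzero closed subspace reduces both
semigroups in such a way that both restrict to unitary semigroups. -/
def IsCnuPair (V1 V2 : ℝ≥0 → G →L[ℂ] G) : Prop :=
  ∀ L : Submodule ℂ G, IsClosed (L : Set G) → ReducedBy V1 L → ReducedBy V2 L →
    IsUnitarySemigroupOn V1 L → IsUnitarySemigroupOn V2 L → L = ⊥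

/-- A strongly continuous one-parameter unitary group. -/
def IsUnitaryGroup (U : ℝ → G →L[ℂ] G) : Prop :=
  U 0 = 1 ∧ (∀ s t : ℝ, U (s + t) = U s ∘L U t) ∧
  (∀ (t : ℝ) (x : G), ‖U t x‖ = ‖x‖) ∧ (∀ t : ℝ, Function.Surjective (U t)) ∧
  ∀ x : G, Continuous fun t : ℝ => U t x

/-- Two subspaces are mutually orthogonal. -/
def OrthoSubspaces (A B : Submodule ℂ G) : Prop :=
  ∀ x ∈ A, ∀ y ∈ B, ⟪x, y⟫_ℂ = 0

end SemigroupDefs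

/-- The closed first quadrant `ℝ₊² ⊆ ℝ²`. -/
def QQ : Set (ℝ × ℝ) := {p | 0 ≤ p.1 ∧ 0 ≤ p.2}

/-- Lebesgue measure on `ℝ²` restricted to the quadrant `ℝ₊²`; `Lp F 2 nuQ` plays the
role of `L²(ℝ₊², F)`. -/
def nuQ : Measure (ℝ × ℝ) := (volume : Measure (ℝ × ℝ)).restrict QQ

/-- Lebesgue measure on `ℝ²` restricted to `ℝ² ∖ ℝ₊²`; `Lp F 2 nuQc` plays the role of
`L²(ℝ² ∖ ℝ₊², F)`. -/
def nuQc : Measure (ℝ × ℝ) := (volume : Measure (ℝ × ℝ)).restrict QQᶜ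

/-- `(V1, V2)` is a bishift-semigroup: it is jointly unitarily equivalent to the pair
`(𝒮₁^F, 𝒮₂^F)` of shift semigroups on `L²(ℝ₊², F)` for some Hilbert space `F`. -/
def IsBishiftPair {G : Type} [NormedAddCommGroup G] [InnerProductSpace ℂ G] [CompleteSpace G]
    (V1 V2 : ℝ≥0 → G →L[ℂ] G) : Prop :=
  ∃ (F : Type) (_ : NormedAddCommGroup F) (_ : InnerProductSpace ℂ F) (_ : CompleteSpace F)
    (Z : G ≃ₗᵢ[ℂ] Lp F 2 nuQ),
    ∀ (t : ℝ≥0) (x : G),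
      ((Z (V1 t x) : ℝ × ℝ → F) =ᵐ[nuQ]
        fun p => if (t : ℝ) ≤ p.1 then (Z x : ℝ × ℝ → F) (p.1 - (t : ℝ), p.2) else 0) ∧
      ((Z (V2 t x) : ℝ × ℝ → F) =ᵐ[nuQ]
        fun p => if (t : ℝ) ≤ p.2 then (Z x : ℝ × ℝ → F) (p.1, p.2 - (t : ℝ)) else 0)


section Abstract

theorem gram_norm {ι : Type} {A B : Type} [NormedAddCommGroup A] [InnerProductSpace ℂ A]
    [NormedAddCommGroup B] [InnerProductSpace ℂ B] (a : ι → A) (b : ι → B)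
    (hab : ∀ i j, ⟪a i, a j⟫_ℂ = ⟪b i, b j⟫_ℂ) (c : ι →₀ ℂ) :
    ‖Finsupp.linearCombination ℂ b c‖ = ‖Finsupp.linearCombination ℂ a c‖ := by
  have : ⟪Finsupp.linearCombination ℂ b c, Finsupp.linearCombination ℂ b c⟫_ℂ =
      ⟪Finsupp.linearCombination ℂ a c, Finsupp.linearCombination ℂ a c⟫_ℂ := by
    simp only [Finsupp.linearCombination_apply, Finsupp.sum_inner, Finsupp.inner_sum, inner_smul_left,
      inner_smul_right, hab]
  rw [inner_self_eq_norm_sq_to_K, inner_self_eq_norm_sq_to_K] at this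
  have h2 : ‖Finsupp.linearCombination ℂ b c‖ ^ 2 = ‖Finsupp.linearCombination ℂ a c‖ ^ 2 := by
    exact_mod_cast this
  exact (pow_left_inj₀ (norm_nonneg _) (norm_nonneg _) two_ne_zero).1 h2

theorem dense_of_total {ι : Type} {A : Type} [NormedAddCommGroup A] [InnerProductSpace ℂ A]
    [CompleteSpace A] (a : ι → A) (ha : ∀ x, (∀ i, ⟪a i, x⟫_ℂ = 0) → x = 0) :
    DenseRange (Finsupp.linearCombination ℂ a) := by
  have h : (Submodule.span ℂ (Set.range a)).topologicalClosure = ⊤ := by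
    rw [Submodule.topologicalClosure_eq_top_iff, Submodule.eq_bot_iff]
    intro x hx
    apply ha
    intro i
    exact (Submodule.mem_orthogonal _ _).1 hx _ (Submodule.subset_span ⟨i, rfl⟩)
  have h3 := Submodule.dense_iff_topologicalClosure_eq_top.2 h
  rw [← Finsupp.range_linearCombination] at h3
  exact h3

theorem gram_unitary {ι : Type} {A B : Type} [NormedAddCommGroup A] [InnerProductSpace ℂ A]
    [CompleteSpace A] [NormedAddCommGroup B] [InnerProductSpace ℂ B] [CompleteSpace B]
    (a : ι → A) (b : ι → B)
    (hab : ∀ i j, ⟪a i, a j⟫_ℂ = ⟪b i, b j⟫_ℂ)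
    (ha : ∀ x, (∀ i, ⟪a i, x⟫_ℂ = 0) → x = 0) (hb : ∀ x, (∀ i, ⟪b i, x⟫_ℂ = 0) → x = 0) :
    ∃ Z : A ≃ₗᵢ[ℂ] B, ∀ i, Z (a i) = b i := by
  refine ⟨(LinearEquiv.refl ℂ (ι →₀ ℂ)).extendOfIsometry (Finsupp.linearCombination ℂ a)
    (Finsupp.linearCombination ℂ b) (dense_of_total a ha) (dense_of_total b hb)
    (fun c => gram_norm a b hab c), fun i => ?_⟩
  have := (LinearEquiv.refl ℂ (ι →₀ ℂ)).extendOfIsometry_eq (Finsupp.linearCombination ℂ a)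
    (Finsupp.linearCombination ℂ b) (dense_of_total a ha) (dense_of_total b hb)
    (fun c => gram_norm a b hab c) (Finsupp.single i 1)
  simpa using this

theorem clm_eq_of_total {ι : Type} {A B : Type} [NormedAddCommGroup A] [InnerProductSpace ℂ A]
    [CompleteSpace A] [NormedAddCommGroup B] [InnerProductSpace ℂ B] 
    (a : ι → A) (ha : ∀ x, (∀ i, ⟪a i, x⟫_ℂ = 0) → x = 0) (S T : A →L[ℂ] B)
    (h : ∀ i, S (a i) = T (a i)) : S = T := by
  have h1 : (S : A → B) = T := by
    apply (dense_of_total a ha).equalizer S.continuous T.continuous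
    funext c
    simp [Finsupp.linearCombination_apply, map_finsuppSum, h]
  exact ContinuousLinearMap.coeFn_injective h1

end Abstract

section Resolvent

open Set Filter Topology

set_option linter.unusedSectionVars false

variable {G : Type} [NormedAddCommGroup G] [InnerProductSpace ℂ G] [CompleteSpace G]

def IsContr (U : ℝ≥0 → G →L[ℂ] G) : Prop := IsC0Semigroup U ∧ ∀ t x, ‖U t x‖ ≤ ‖x‖

def orb (U : ℝ≥0 → G →L[ℂ] G) (x : G) (t : ℝ) : G := Real.exp (-t) • U t.toNNReal x

theorem orb_cont {U : ℝ≥0 → G →L[ℂ] G} (h : IsContr U) (x : G) : Continuous (orb U x) := by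
  have h1 := (h.1.2.2 x).comp continuous_real_toNNReal
  unfold orb
  exact (Real.continuous_exp.comp continuous_neg).smul h1

theorem orb_norm {U : ℝ≥0 → G →L[ℂ] G} (h : IsContr U) (x : G) (t : ℝ) :
    ‖orb U x t‖ ≤ Real.exp (-t) * ‖x‖ := by
  unfold orb
  rw [norm_smul, Real.norm_eq_abs, abs_of_pos (Real.exp_pos _)]
  exact mul_le_mul_of_nonneg_left (h.2 _ _) (Real.exp_pos _).le

theorem exp_int (c : ℝ) : IntegrableOn (fun t : ℝ => Real.exp (-t)) (Ioi c) := by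
  simpa using integrableOn_exp_mul_Ioi (a := -1) (by norm_num) c

theorem orb_int {U : ℝ≥0 → G →L[ℂ] G} (h : IsContr U) (x : G) (c : ℝ) :
    IntegrableOn (orb U x) (Ioi c) := by
  refine Integrable.mono' ((exp_int c).mul_const ‖x‖) (orb_cont h x).aestronglyMeasurable ?_
  exact Eventually.of_forall (orb_norm h x)

def resL {U : ℝ≥0 → G →L[ℂ] G} (h : IsContr U) : G →ₗ[ℂ] G where
  toFun x := ∫ t in Ioi (0:ℝ), orb U x t
  map_add' x y := by
    rw [← integral_add (orb_int h x 0) (orb_int h y 0)]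
    congr 1; funext t; simp [orb]
  map_smul' c x := by
    rw [← integral_smul]
    congr 1; funext t; simp only [orb, map_smul]; rw [smul_comm]; rfl

def res {U : ℝ≥0 → G →L[ℂ] G} (h : IsContr U) : G →L[ℂ] G :=
  (resL h).mkContinuous 1 (fun x => by
    calc ‖resL h x‖ ≤ ∫ t in Ioi (0:ℝ), Real.exp (-t) * ‖x‖ :=
          norm_integral_le_of_norm_le ((exp_int 0).mul_const ‖x‖)
            (Eventually.of_forall (orb_norm h x))
      _ = 1 * ‖x‖ := by
          rw [integral_mul_const, integral_exp_neg_Ioi_zero])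

theorem res_apply {U : ℝ≥0 → G →L[ℂ] G} (h : IsContr U) (x : G) :
    res h x = ∫ t in Ioi (0:ℝ), orb U x t := rfl

/-- commuting operators -/
theorem res_comm {U : ℝ≥0 → G →L[ℂ] G} (h : IsContr U) (T : G →L[ℂ] G)
    (hT : ∀ t x, T (U t x) = U t (T x)) (x : G) : T (res h x) = res h (T x) := by
  rw [res_apply, res_apply, ← ContinuousLinearMap.integral_comp_comm T (orb_int h x 0)]
  congr 1; funext t
  simp [orb, hT]

theorem res_shift {U : ℝ≥0 → G →L[ℂ] G} (h : IsContr U) (x : G) {t : ℝ} (ht : 0 ≤ t) :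
    U t.toNNReal (res h x) = Real.exp t • (res h x - ∫ s in (0:ℝ)..t, orb U x s) := by
  have e1 : res h x - ∫ s in (0:ℝ)..t, orb U x s = ∫ s in Ioi t, orb U x s := by
    rw [res_apply, ← intervalIntegral.integral_Ioi_sub_Ioi (orb_int h x 0) ht]
    abel
  have e2 : ∫ s in Ioi t, orb U x s = ∫ s in Ioi (0:ℝ), orb U x (s + t) := by
    have h3 := (measurePreserving_add_right volume t).setIntegral_preimage_emb
      (measurableEmbedding_addRight t) (orb U x) (Ioi t)
    rw [← h3]
    simp
  rw [e1, e2, res_apply, ← ContinuousLinearMap.integral_comp_comm _ (orb_int h x 0),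
    ← integral_smul]
  refine setIntegral_congr_fun measurableSet_Ioi (fun s hs => ?_)
  have hs' : (0:ℝ) ≤ s := (mem_Ioi.1 hs).le
  simp only [orb, ContinuousLinearMap.map_smul_of_tower]
  rw [Real.toNNReal_add hs' ht, add_comm s.toNNReal, h.1.2.1, smul_smul, ← Real.exp_add]
  simp

theorem res_deriv {U : ℝ≥0 → G →L[ℂ] G} (h : IsContr U) (x : G) {t : ℝ} (ht : 0 ≤ t) :
    HasDerivWithinAt (fun t : ℝ => U t.toNNReal (res h x))
      (U t.toNNReal (res h x) - U t.toNNReal x) (Ici t) t := by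
  have d1 : HasDerivAt (fun t : ℝ => ∫ s in (0:ℝ)..t, orb U x s) (orb U x t) t :=
    intervalIntegral.integral_hasDerivAt_right ((orb_cont h x).intervalIntegrable _ _)
      ((orb_cont h x).stronglyMeasurableAtFilter _ _) (orb_cont h x).continuousAt
  have d2 := (Real.hasDerivAt_exp t).smul (d1.const_sub (res h x))
  have d3 := d2.hasDerivWithinAt (s := Ici t)
  refine (d3.congr (fun s hs => ?_) ?_).congr_deriv ?_
  · exact res_shift h x (ht.trans hs)
  · exact res_shift h x ht
  · rw [res_shift h x ht]
    simp only [orb, smul_neg, smul_smul, ← Real.exp_add]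
    simp [sub_eq_add_neg, add_comm]

theorem res_inj {U : ℝ≥0 → G →L[ℂ] G} (h : IsContr U) (x : G) (hx : res h x = 0) : x = 0 := by
  have d := res_deriv h x (le_refl 0)
  simp only [hx, map_zero, zero_sub] at d
  have := (uniqueDiffOn_Ici (0:ℝ) 0 (self_mem_Ici)).eq_deriv _ d (hasDerivWithinAt_const _ _ _)
  simpa [h.1.1] using this

theorem cont_toNN {U : ℝ≥0 → G →L[ℂ] G} (h : IsContr U) (x : G) :
    Continuous fun t : ℝ => U t.toNNReal x := (h.1.2.2 x).comp continuous_real_toNNReal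

/-- eigenvectors -/
theorem res_eig {U : ℝ≥0 → G →L[ℂ] G} (h : IsContr U) (w : G) (hw : (2:ℝ) • res h w = w) (t : ℝ≥0) :
    U t w = Real.exp (-t) • w := by
  have key : ∀ s : ℝ, 0 ≤ s → HasDerivWithinAt (fun t : ℝ => Real.exp t • U t.toNNReal w) 0 (Ici s) s := by
    intro s hs
    have d := (res_deriv h w hs).const_smul (2:ℝ)
    have d2 : HasDerivWithinAt (fun t : ℝ => U t.toNNReal w) (- U s.toNNReal w) (Ici s) s := by
      refine (d.congr_deriv ?_).congr (fun y _ => ?_) ?_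
      · rw [smul_sub, ← ContinuousLinearMap.map_smul_of_tower, hw, two_smul]; abel
      · simp only [Pi.smul_apply]; rw [← ContinuousLinearMap.map_smul_of_tower, hw]
      · simp only [Pi.smul_apply]; rw [← ContinuousLinearMap.map_smul_of_tower, hw]
    refine ((Real.hasDerivAt_exp s).hasDerivWithinAt.smul d2).congr_deriv ?_
    simp
  have := constant_of_has_deriv_right_zero (f := fun t : ℝ => Real.exp t • U t.toNNReal w)
    (a := 0) (b := t) ((Real.continuous_exp.smul (cont_toNN h w)).continuousOn)
    (fun s hs => key s hs.1) t ⟨t.2, le_refl _⟩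
  simp [h.1.1] at this
  conv_rhs => rw [← this]
  rw [smul_smul, ← Real.exp_add]
  simp

theorem sq_deriv {U : ℝ≥0 → G →L[ℂ] G} (h : IsContr U) (x : G) {t : ℝ} (ht : 0 ≤ t) :
    HasDerivWithinAt (fun t : ℝ => ‖U t.toNNReal (res h x)‖ ^ 2)
      (2 * (‖res h (U t.toNNReal x)‖ ^ 2 - 
        (⟪res h (U t.toNNReal x), U t.toNNReal x⟫_ℂ).re)) (Ici t) t := by
  let _ : InnerProductSpace ℝ G := InnerProductSpace.complexToReal
  have d := (res_deriv h x ht).norm_sq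
  refine d.congr_deriv ?_
  have hc : U t.toNNReal (res h x) = res h (U t.toNNReal x) := by
    apply res_comm
    intro s y
    have e1 := h.1.2.1 t.toNNReal s
    have e2 := h.1.2.1 s t.toNNReal
    rw [add_comm, e2] at e1
    exact (congrArg (fun T => T y) e1).symm
  rw [hc, inner_sub_right, real_inner_self_eq_norm_sq, real_inner_eq_re_inner ℂ]
  rfl

end Resolvent

section IsoSg

open Set Filter Topology

set_option linter.unusedSectionVars false

variable {G : Type} [NormedAddCommGroup G] [InnerProductSpace ℂ G] [CompleteSpace G]

theorem iso_contr {V : ℝ≥0 → G →L[ℂ] G} (h : IsIsometrySemigroup V) : IsContr V :=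
  ⟨h.1, fun t x => (h.2 t x).le⟩

theorem iso_adj {V : ℝ≥0 → G →L[ℂ] G} (h : IsIsometrySemigroup V) (t : ℝ≥0) (x : G) :
    adjoint (V t) (V t x) = x := by
  have h1 := ((V t).norm_map_iff_adjoint_comp_self).1 (h.2 t)
  exact congrArg (fun T => T x) h1

theorem iso_adj_norm {V : ℝ≥0 → G →L[ℂ] G} (h : IsIsometrySemigroup V) (t : ℝ≥0) (x : G) :
    ‖adjoint (V t) x‖ ≤ ‖x‖ := by
  have h1 : ‖adjoint (V t)‖ ≤ 1 := by
    rw [LinearIsometryEquiv.norm_map]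
    exact (V t).opNorm_le_bound zero_le_one (fun x => by simp [h.2])
  simpa using (adjoint (V t)).le_of_opNorm_le h1 x

theorem sg_apply {V : ℝ≥0 → G →L[ℂ] G} (h : IsIsometrySemigroup V) (s t : ℝ≥0) (x : G) :
    V (s + t) x = V s (V t x) := by rw [h.1.2.1]; rfl

theorem adj_sg_apply {V : ℝ≥0 → G →L[ℂ] G} (h : IsIsometrySemigroup V) (s t : ℝ≥0) (x : G) :
    adjoint (V (s + t)) x = adjoint (V s) (adjoint (V t) x) := by
  rw [add_comm, h.1.2.1, adjoint_comp]; rfl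

theorem adj_diff {V : ℝ≥0 → G →L[ℂ] G} (h : IsIsometrySemigroup V) (s u : ℝ≥0) (x : G) :
    ‖adjoint (V (s + u)) x - adjoint (V s) x‖ ≤ ‖V u x - x‖ := by
  have : adjoint (V (s + u)) x - adjoint (V s) x = adjoint (V s) (adjoint (V u) (x - V u x)) := by
    rw [adj_sg_apply h, map_sub, map_sub, iso_adj h]
  rw [this, norm_sub_rev (V u x)]
  exact (iso_adj_norm h _ _).trans (iso_adj_norm h _ _)

theorem adj_diff2 {V : ℝ≥0 → G →L[ℂ] G} (h : IsIsometrySemigroup V) (s t : ℝ≥0) (x : G) :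
    ‖adjoint (V t) x - adjoint (V s) x‖ ≤ ‖V (max t s - min t s) x - x‖ := by
  rcases le_total s t with hst | hst
  · have := adj_diff h s (t - s) x
    rw [add_tsub_cancel_of_le hst] at this
    simpa [hst] using this
  · have := adj_diff h t (s - t) x
    rw [add_tsub_cancel_of_le hst] at this
    rw [norm_sub_rev]
    simpa [hst] using this

theorem adj_contr {V : ℝ≥0 → G →L[ℂ] G} (h : IsIsometrySemigroup V) :
    IsContr (fun t => adjoint (V t)) := by
  refine ⟨⟨?_, ?_, ?_⟩, iso_adj_norm h⟩
  · simp only [h.1.1]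
    ext x; apply ext_inner_left ℂ; intro y; rw [adjoint_inner_right]; rfl
  · intro s t; ext x; exact adj_sg_apply h s t x
  · intro x
    rw [continuous_iff_continuousAt]
    intro s
    rw [ContinuousAt, tendsto_iff_norm_sub_tendsto_zero]
    have c : Continuous fun t : ℝ≥0 => ‖V (max t s - min t s) x - x‖ :=
      (((h.1.2.2 x).comp (by fun_prop : Continuous fun t : ℝ≥0 => max t s - min t s)).sub
        continuous_const).norm
    have c0 := c.tendsto s
    simp [h.1.1] at c0
    exact squeeze_zero (fun _ => norm_nonneg _) (fun t => adj_diff2 h s t x) c0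

def RR {V : ℝ≥0 → G →L[ℂ] G} (h : IsIsometrySemigroup V) : G →L[ℂ] G := res (iso_contr h)
def RS {V : ℝ≥0 → G →L[ℂ] G} (h : IsIsometrySemigroup V) : G →L[ℂ] G := res (adj_contr h)

theorem inner_RR {V : ℝ≥0 → G →L[ℂ] G} (h : IsIsometrySemigroup V) (x y : G) :
    ⟪x, RR h y⟫_ℂ = ⟪RS h x, y⟫_ℂ := by
  rw [← inner_conj_symm (RS h x) y]
  unfold RR RS
  rw [res_apply, res_apply, ← integral_inner (orb_int (iso_contr h) y 0),
    ← integral_inner (orb_int (adj_contr h) x 0), ← integral_conj]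
  congr 1; funext t
  simp only [orb]
  rw [inner_conj_symm, inner_smul_left_eq_smul, inner_smul_right_eq_smul, adjoint_inner_left]

theorem SR_eq {V : ℝ≥0 → G →L[ℂ] G} (h : IsIsometrySemigroup V) (x : G) :
    (2:ℂ) • RS h (RR h x) = RR h x + RS h x := by
  have key : ∀ x, ‖RR h x‖ ^ 2 - (⟪RR h x, x⟫_ℂ).re = 0 := by
    intro x
    have d := sq_deriv (iso_contr h) x (le_refl 0)
    simp only [h.2] at d
    have := (uniqueDiffOn_Ici (0:ℝ) 0 (self_mem_Ici)).eq_deriv _ d (hasDerivWithinAt_const _ _ _)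
    simp [h.1.1] at this
    exact this
  have h0 : (((2:ℂ) • (RS h ∘L RR h) - RR h - RS h : G →L[ℂ] G) : G →ₗ[ℂ] G) = 0 := by
    rw [← inner_map_self_eq_zero]
    intro y
    simp only [coe_coe, sub_apply, smul_apply, comp_apply, inner_sub_left, inner_smul_left]
    rw [← inner_RR, ← inner_RR, ← inner_conj_symm y (RR h y)]
    have k := key y
    rw [inner_self_eq_norm_sq_to_K]
    have k2 : ((‖RR h y‖ ^ 2 : ℝ) : ℂ) = ((⟪RR h y, y⟫_ℂ).re : ℂ) := by
      rw [sub_eq_zero.1 k]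
    have k3 := Complex.add_conj ⟪RR h y, y⟫_ℂ
    simp only [map_ofNat]
    push_cast at k2 k3
    simp only [Complex.coe_algebraMap]
    rw [k2, sub_sub, k3, sub_self]
  have h1 := congrArg (fun T : G →ₗ[ℂ] G => T x) h0
  simp at h1
  rw [sub_sub, sub_eq_zero] at h1
  exact h1

def QV {V : ℝ≥0 → G →L[ℂ] G} (h : IsIsometrySemigroup V) : G →L[ℂ] G :=
  RR h + RS h - (2:ℂ) • (RR h ∘L RS h)

theorem QV_apply {V : ℝ≥0 → G →L[ℂ] G} (h : IsIsometrySemigroup V) (x : G) :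
    QV h x = RR h x + RS h x - (2:ℂ) • RR h (RS h x) := rfl

theorem QV_eig {V : ℝ≥0 → G →L[ℂ] G} (h : IsIsometrySemigroup V) (x : G) (t : ℝ≥0) :
    adjoint (V t) (QV h x) = Real.exp (-t) • QV h x := by
  refine res_eig (adj_contr h) (QV h x) ?_ t
  have : (2:ℂ) • RS h (QV h x) = QV h x := by
    rw [QV_apply, map_sub, map_add, map_smul, SR_eq h (RS h x), smul_sub, smul_add, SR_eq h x,
      smul_add, two_smul ℂ (RS h (RS h x))]
    abel
  rw [two_smul] at this ⊢
  exact this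

theorem QV_symm {V : ℝ≥0 → G →L[ℂ] G} (h : IsIsometrySemigroup V) (x y : G) :
    ⟪QV h x, y⟫_ℂ = ⟪x, QV h y⟫_ℂ := by
  have i2 : ∀ x y : G, ⟪RR h x, y⟫_ℂ = ⟪x, RS h y⟫_ℂ := by
    intro x y
    rw [← inner_conj_symm, inner_RR, inner_conj_symm]
  simp only [QV_apply, inner_sub_left, inner_add_left, inner_sub_right, inner_add_right,
    inner_smul_left, inner_smul_right, i2, inner_RR, map_ofNat]
  ring

theorem QV_comm {V : ℝ≥0 → G →L[ℂ] G} (h : IsIsometrySemigroup V) (T : G →L[ℂ] G)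
    (h1 : ∀ t x, T (V t x) = V t (T x)) (h2 : ∀ t x, T (adjoint (V t) x) = adjoint (V t) (T x))
    (x : G) : T (QV h x) = QV h (T x) := by
  have a1 : ∀ x, T (RR h x) = RR h (T x) := res_comm _ T h1
  have a2 : ∀ x, T (RS h x) = RS h (T x) := res_comm _ T h2
  simp only [QV_apply, map_sub, map_add, map_smul, a1, a2]

def HU (V : ℝ≥0 → G →L[ℂ] G) : Submodule ℂ G where
  carrier := {x | ∀ t, V t (adjoint (V t) x) = x}
  add_mem' := by intro a b ha hb t; simp [ha t, hb t]
  zero_mem' := by intro t; simp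
  smul_mem' := by intro c x hx t; simp [hx t]

theorem mem_HU {V : ℝ≥0 → G →L[ℂ] G} (x : G) : x ∈ HU V ↔ ∀ t, V t (adjoint (V t) x) = x := Iff.rfl

theorem HU_bot {V : ℝ≥0 → G →L[ℂ] G} (h : IsIsometrySemigroup V) (hc : IsCnu V) : HU V = ⊥ := by
  have r1 : ∀ t : ℝ≥0, ∀ x ∈ HU V, V t x ∈ HU V := by
    intro s x hx t
    rcases le_total t s with hts | hts
    · obtain ⟨r, rfl⟩ := exists_add_of_le hts
      rw [sg_apply h, iso_adj h]
    · obtain ⟨r, rfl⟩ := exists_add_of_le hts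
      rw [add_comm s r, adj_sg_apply h, iso_adj h, add_comm r s, sg_apply h, hx]
  have r2 : ∀ t : ℝ≥0, ∀ x ∈ HU V, adjoint (V t) x ∈ HU V := by
    intro s x hx t
    have e := hx (s + t)
    rw [← adj_sg_apply h]
    conv_rhs => rw [← e]
    rw [sg_apply h, iso_adj h, add_comm]
  refine hc (HU V) ?_ le_top ⟨r1, r2⟩ ?_
  · have : (HU V : Set G) = ⋂ t, {x | V t (adjoint (V t) x) = x} := by
      ext x; simp [mem_HU]
    rw [this]
    exact isClosed_iInter fun t => isClosed_eq (by fun_prop) continuous_id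
  · intro t
    exact ⟨r1 t, fun x _ => h.2 t x, fun y hy => ⟨_, r2 t y hy, hy t⟩⟩

theorem QV_total {V : ℝ≥0 → G →L[ℂ] G} (h : IsIsometrySemigroup V) (hc : IsCnu V) (x : G)
    (hx : ∀ s, QV h (adjoint (V s) x) = 0) : x = 0 := by
  apply res_inj (adj_contr h)
  have hm : RS h x ∈ HU V := by
    intro t
    have hn : ‖adjoint (V t) (RS h x)‖ ^ 2 = ‖RS h x‖ ^ 2 := by
      have := constant_of_has_deriv_right_zero
        (f := fun t : ℝ => ‖adjoint (V t.toNNReal) (RS h x)‖ ^ 2) (a := 0) (b := t)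
        (((cont_toNN (adj_contr h) (RS h x)).norm.pow 2).continuousOn)
        (fun s hs => (sq_deriv (adj_contr h) x hs.1).congr_deriv ?_) t ⟨t.2, le_refl _⟩
      · simpa [(adj_contr h).1.1] using this
      · have q := hx s.toNNReal
        set z := adjoint (V s.toNNReal) x
        change 2 * (‖RS h z‖ ^ 2 - (⟪RS h z, z⟫_ℂ).re) = 0
        have q2 : ⟪QV h z, z⟫_ℂ = 0 := by rw [q, inner_zero_left]
        rw [QV_apply, inner_sub_left, inner_add_left, inner_smul_left, ← inner_conj_symm (RR h z) z,
          inner_RR, ← inner_conj_symm (RR h _) z, inner_RR, inner_conj_symm] at q2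
        have q3 := congrArg Complex.re q2
        rw [inner_self_eq_norm_sq_to_K] at q3
        rw [← inner_conj_symm] at q3
        simp [← Complex.ofReal_pow] at q3
        have q4 : (⟪RS h z, z⟫_ℂ).re = (⟪z, RS h z⟫_ℂ).re := by
          rw [← inner_conj_symm, Complex.conj_re]
        rw [q4] at q3 ⊢
        linarith
    have e : ⟪V t (adjoint (V t) (RS h x)), RS h x⟫_ℂ = (‖RS h x‖ : ℂ) ^ 2 := by
      rw [← adjoint_inner_right, inner_self_eq_norm_sq_to_K]
      have hn2 := congrArg (fun r : ℝ => (r : ℂ)) hn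
      simp only [Complex.ofReal_pow] at hn2
      exact hn2
    rw [← sub_eq_zero, ← norm_eq_zero, ← sq_eq_zero_iff, @norm_sub_sq ℂ, h.2, hn, e]
    have : RCLike.re ((‖RS h x‖ : ℂ) ^ 2) = ‖RS h x‖ ^ 2 := by
      rw [← Complex.ofReal_pow]; exact Complex.ofReal_re _
    rw [this]; ring
  rw [HU_bot h hc] at hm
  exact (Submodule.mem_bot ℂ).1 hm

end IsoSg

section Model

open Set Filter Topology

set_option linter.unusedSectionVars false

def kap (s r : ℝ) : ℝ := if s ≤ r then √2 * Real.exp (-(r - s)) else 0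

def mu0 : Measure ℝ := (volume : Measure ℝ).restrict (Ici 0)

instance : SFinite mu0 := by unfold mu0; infer_instance

theorem nuQ_eq : nuQ = mu0.prod mu0 := by
  unfold nuQ mu0
  rw [Measure.prod_restrict, ← Measure.volume_eq_prod]
  rfl

instance : SFinite nuQ := by unfold nuQ; infer_instance

theorem kap_meas (s : ℝ) : Measurable (kap s) := by
  unfold kap
  exact Measurable.ite measurableSet_Ici (by fun_prop) measurable_const

theorem kap_mul (s s' : ℝ) : (fun r => kap s r * kap s' r) =
    (Ici (max s s')).indicator (fun r => 2 * Real.exp (s + s') * Real.exp (-2 * r)) := by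
  funext r
  have h2 : √2 * √2 = (2:ℝ) := Real.mul_self_sqrt (by norm_num)
  by_cases h : max s s' ≤ r
  · rw [indicator_of_mem (mem_Ici.2 h)]
    have := max_le_iff.1 h
    simp only [kap, this.1, this.2, if_true]
    have e : Real.exp (-(r - s)) * Real.exp (-(r - s')) = Real.exp (s + s') * Real.exp (-2 * r) := by
      rw [← Real.exp_add, ← Real.exp_add]; congr 1; ring
    calc _ = (√2 * √2) * (Real.exp (-(r - s)) * Real.exp (-(r - s'))) := by ring
      _ = _ := by rw [h2, e]; ring
  · rw [indicator_of_notMem (by simpa using h)]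
    rw [max_le_iff, not_and_or] at h
    rcases h with h | h <;> simp [kap, h]

theorem kap_int (s s' : ℝ) : Integrable (fun r => kap s r * kap s' r) mu0 := by
  apply Integrable.mono_measure _ Measure.restrict_le_self
  rw [kap_mul, integrable_indicator_iff measurableSet_Ici, integrableOn_Ici_iff_integrableOn_Ioi]
  exact (integrableOn_exp_mul_Ioi (by norm_num) _).const_mul _

theorem kap_gram {s s' : ℝ} (hs : 0 ≤ s) :
    ∫ r, kap s r * kap s' r ∂mu0 = Real.exp (-|s - s'|) := by
  unfold mu0
  rw [kap_mul, setIntegral_indicator measurableSet_Ici,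
    Ici_inter_Ici, sup_eq_right.2 (le_max_of_le_left hs),
    integral_Ici_eq_integral_Ioi, integral_const_mul, integral_exp_mul_Ioi (by norm_num)]
  have : -|s - s'| = s + s' + -2 * max s s' := by
    rcases le_total s s' with h | h
    · rw [max_eq_right h, abs_of_nonpos (by linarith)]; ring
    · rw [max_eq_left h, abs_of_nonneg (by linarith)]; ring
  rw [this, Real.exp_add (s + s')]
  ring

variable {F : Type} [NormedAddCommGroup F] [InnerProductSpace ℂ F] 

def kf (s t : ℝ) (w : F) (p : ℝ × ℝ) : F := (kap s p.1 * kap t p.2) • w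

theorem kf_meas (s t : ℝ) (w : F) : StronglyMeasurable (kf s t w) := by
  unfold kf
  exact (((kap_meas s).comp measurable_fst).mul
    ((kap_meas t).comp measurable_snd)).stronglyMeasurable.smul_const w

theorem kf_inner (s t s' t' : ℝ) (w w' : F) (p : ℝ × ℝ) : ⟪kf s t w p, kf s' t' w' p⟫_ℂ =
    (((kap s p.1 * kap s' p.1) * (kap t p.2 * kap t' p.2) : ℝ) : ℂ) * ⟪w, w'⟫_ℂ := by
  unfold kf
  rw [inner_smul_left_eq_smul, inner_smul_right_eq_smul, smul_smul, Complex.real_smul]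
  congr 2
  ring

theorem kf_memLp (s t : ℝ) (w : F) : MemLp (kf s t w) 2 nuQ := by
  rw [memLp_two_iff_integrable_sq_norm (kf_meas s t w).aestronglyMeasurable, nuQ_eq]
  have := ((kap_int s s).mul_prod (kap_int t t)).mul_const (‖w‖ ^ 2)
  convert this using 1
  funext p
  simp only [kf, norm_smul, Real.norm_eq_abs, mul_pow, sq_abs]
  ring

def bvec (s t : ℝ) (w : F) : Lp F 2 nuQ := (kf_memLp s t w).toLp

theorem bvec_coe (s t : ℝ) (w : F) : bvec s t w =ᵐ[nuQ] kf s t w := MemLp.coeFn_toLp _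

theorem bvec_gram {s t : ℝ} (s' t' : ℝ) (hs : 0 ≤ s) (ht : 0 ≤ t) (w w' : F) :
    ⟪bvec s t w, bvec s' t' w'⟫_ℂ =
      ((Real.exp (-|s - s'|) * Real.exp (-|t - t'|) : ℝ) : ℂ) * ⟪w, w'⟫_ℂ := by
  rw [L2.inner_def]
  have : (fun p => ⟪bvec s t w p, bvec s' t' w' p⟫_ℂ) =ᵐ[nuQ] fun p =>
      (((kap s p.1 * kap s' p.1) * (kap t p.2 * kap t' p.2) : ℝ) : ℂ) * ⟪w, w'⟫_ℂ := by
    filter_upwards [bvec_coe s t w, bvec_coe s' t' w'] with p h1 h2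
    rw [h1, h2, kf_inner]
  rw [integral_congr_ae this, integral_mul_const, integral_complex_ofReal, nuQ_eq,
    integral_prod_mul (fun r => kap s r * kap s' r) (fun r => kap t r * kap t' r),
    kap_gram hs, kap_gram ht]

theorem quad_gen : (inferInstance : MeasurableSpace (ℝ × ℝ)) =
    MeasurableSpace.generateFrom (image2 (· ×ˢ ·) (range (Ici : ℝ → Set ℝ)) (range (Ici : ℝ → Set ℝ))) := by
  symm
  apply generateFrom_eq_prod
  · rw [← borel_eq_generateFrom_Ici, BorelSpace.measurable_eq (α := ℝ)]
  · rw [← borel_eq_generateFrom_Ici, BorelSpace.measurable_eq (α := ℝ)]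
  · exact ⟨fun n : ℕ => Ici (-(n:ℝ)), fun n => ⟨_, rfl⟩, by
      rw [iUnion_eq_univ_iff]; intro x; obtain ⟨n, hn⟩ := exists_nat_ge (-x)
      exact ⟨n, by simp; linarith⟩⟩
  · exact ⟨fun n : ℕ => Ici (-(n:ℝ)), fun n => ⟨_, rfl⟩, by
      rw [iUnion_eq_univ_iff]; intro x; obtain ⟨n, hn⟩ := exists_nat_ge (-x)
      exact ⟨n, by simp; linarith⟩⟩

theorem quad_pi : IsPiSystem (image2 (· ×ˢ ·) (range (Ici : ℝ → Set ℝ)) (range (Ici : ℝ → Set ℝ))) := by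
  apply IsPiSystem.prod
  · rintro _ ⟨a, rfl⟩ _ ⟨b, rfl⟩ _; exact ⟨a ⊔ b, by rw [Ici_inter_Ici]⟩
  · rintro _ ⟨a, rfl⟩ _ ⟨b, rfl⟩ _; exact ⟨a ⊔ b, by rw [Ici_inter_Ici]⟩

variable [CompleteSpace F]

theorem bvec_total (g : Lp F 2 nuQ)
    (hg : ∀ s t : ℝ, 0 ≤ s → 0 ≤ t → ∀ w : F, ⟪bvec s t w, g⟫_ℂ = 0) : g = 0 := by
  let E : ℝ × ℝ → ℝ := fun p => kap 0 p.1 * kap 0 p.2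
  have hE : MemLp E 2 nuQ := by
    have := (kf_memLp 0 0 (1:ℂ)).norm
    convert this using 1
    funext p
    simp only [E, kf, norm_smul, Real.norm_eq_abs]
    rw [norm_one, mul_one, abs_of_nonneg]
    unfold kap; positivity
  have hint : Integrable (fun p => E p • g p) nuQ := by
    rw [← memLp_one_iff_integrable]
    have hEc : MemLp (fun p => (E p : ℂ)) 2 nuQ := hE.ofReal
    exact (Lp.memLp g).smul hEc
  have hq0 : ∀ s t : ℝ, 0 ≤ s → 0 ≤ t → ∫ p in Ici s ×ˢ Ici t, E p • g p ∂nuQ = 0 := by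
    intro s t hs ht
    apply ext_inner_left ℂ
    intro w
    rw [inner_zero_right, ← integral_inner hint.integrableOn,
      ← integral_indicator (measurableSet_Ici.prod measurableSet_Ici)]
    have h := hg s t hs ht w
    rw [L2.inner_def] at h
    have h2 : ∫ p, ((Real.exp (-s) * Real.exp (-t) : ℝ) : ℂ) * ⟪bvec s t w p, g p⟫_ℂ ∂nuQ = 0 := by
      rw [integral_const_mul, h, mul_zero]
    rw [← h2]
    apply integral_congr_ae
    filter_upwards [bvec_coe s t w] with p hp
    rw [hp]
    unfold kf
    rw [inner_smul_left_eq_smul, Complex.real_smul, ← mul_assoc, ← Complex.ofReal_mul]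
    by_cases hm : p ∈ Ici s ×ˢ Ici t
    · rw [indicator_of_mem hm, inner_smul_right_eq_smul, Complex.real_smul]
      congr 2
      have h1 : s ≤ p.1 := hm.1
      have h2 : t ≤ p.2 := hm.2
      simp only [E, kap, h1, h2, hs.trans h1, ht.trans h2, if_true]
      have e1 : Real.exp (-(p.1 - 0)) = Real.exp (-s) * Real.exp (-(p.1 - s)) := by
        rw [← Real.exp_add]; congr 1; ring
      have e2 : Real.exp (-(p.2 - 0)) = Real.exp (-t) * Real.exp (-(p.2 - t)) := by
        rw [← Real.exp_add]; congr 1; ring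
      rw [e1, e2]; ring
    · rw [indicator_of_notMem hm]
      have : kap s p.1 * kap t p.2 = 0 := by
        simp only [mem_prod, mem_Ici, not_and_or] at hm
        rcases hm with hm | hm <;> simp [kap, hm]
      rw [this]; simp
  have hQ : MeasurableSet QQ :=
    (measurableSet_Ici.prod measurableSet_Ici : MeasurableSet ((Ici (0:ℝ)) ×ˢ (Ici (0:ℝ))))
  have hq : ∀ s t : ℝ, ∫ p in Ici s ×ˢ Ici t, E p • g p ∂nuQ = 0 := by
    intro s t
    rw [← hq0 (max s 0) (max t 0) (le_max_right _ _) (le_max_right _ _)]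
    unfold nuQ
    rw [Measure.restrict_restrict (measurableSet_Ici.prod measurableSet_Ici),
      Measure.restrict_restrict (measurableSet_Ici.prod measurableSet_Ici)]
    congr 2
    ext p
    simp only [QQ, mem_inter_iff, mem_prod, mem_Ici, mem_ofPred_eq, max_le_iff]
    tauto
  have huniv : ∫ p, E p • g p ∂nuQ = 0 := by
    rw [← hq 0 0]
    unfold nuQ
    rw [Measure.restrict_restrict (measurableSet_Ici.prod measurableSet_Ici)]
    congr 2
    ext p
    simp only [QQ, mem_inter_iff, mem_prod, mem_Ici, mem_ofPred_eq]
    tauto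
  have hall : ∀ A : Set (ℝ × ℝ), MeasurableSet A → ∫ p in A, E p • g p ∂nuQ = 0 := by
    refine MeasurableSpace.induction_on_inter quad_gen quad_pi (by simp) ?_ ?_ ?_
    · rintro _ ⟨_, ⟨s, rfl⟩, _, ⟨t, rfl⟩, rfl⟩
      exact hq s t
    · intro A hA h
      have := integral_add_compl hA hint
      rw [h, huniv, zero_add] at this
      exact this
    · intro f hd hm h
      rw [integral_iUnion hm hd hint.integrableOn]
      simp [h]
  have hz := hint.ae_eq_zero_of_forall_setIntegral_eq_zero (fun A hA _ => hall A hA)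
  apply Lp.ext
  have hmem : ∀ᵐ p ∂nuQ, p ∈ QQ := ae_restrict_mem hQ
  filter_upwards [hz, hmem, Lp.coeFn_zero F 2 nuQ] with p h1 h2 h3
  rw [h3]
  have hpos : E p ≠ 0 := by
    have := h2.1
    have := h2.2
    simp only [E, kap, *, if_true]
    positivity
  simpa [hpos] using h1

end Model

section Shift

open Set Filter Topology

set_option linter.unusedSectionVars false

variable {F : Type} [NormedAddCommGroup F] [InnerProductSpace ℂ F] 

theorem shift_mem {ν : Measure (ℝ × ℝ)} {A : Set (ℝ × ℝ)} (hA : MeasurableSet A)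
    {τ : ℝ × ℝ → ℝ × ℝ} (hτ : MeasurePreserving τ (ν.restrict A) ν) (f : Lp F 2 ν) :
    MemLp (A.indicator (f ∘ τ)) 2 ν := by
  rw [memLp_indicator_iff_restrict hA]
  exact (Lp.memLp f).comp_measurePreserving hτ

def shiftL {ν : Measure (ℝ × ℝ)} {A : Set (ℝ × ℝ)} (hA : MeasurableSet A)
    {τ : ℝ × ℝ → ℝ × ℝ} (hτ : MeasurePreserving τ (ν.restrict A) ν) :
    Lp F 2 ν →ₗᵢ[ℂ] Lp F 2 ν where
  toFun f := (shift_mem hA hτ f).toLp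
  map_add' f g := by
    rw [← MemLp.toLp_add]
    apply MemLp.toLp_congr
    have h := hτ.quasiMeasurePreserving.ae_eq_comp (Lp.coeFn_add f g)
    have h2 := (ae_restrict_iff' hA).1 h
    filter_upwards [h2] with p hp
    by_cases hm : p ∈ A
    · simpa [hm] using hp hm
    · simp [hm]
  map_smul' c f := by
    rw [RingHom.id_apply, ← MemLp.toLp_const_smul]
    apply MemLp.toLp_congr
    have h := hτ.quasiMeasurePreserving.ae_eq_comp (Lp.coeFn_smul c f)
    have h2 := (ae_restrict_iff' hA).1 h
    filter_upwards [h2] with p hp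
    by_cases hm : p ∈ A
    · simpa [hm] using hp hm
    · simp [hm]
  norm_map' f := by
    change ‖(shift_mem hA hτ f).toLp‖ = ‖f‖
    rw [Lp.norm_toLp, eLpNorm_indicator_eq_eLpNorm_restrict hA,
      eLpNorm_comp_measurePreserving (Lp.aestronglyMeasurable f) hτ, Lp.norm_def]

theorem shiftL_coe {ν : Measure (ℝ × ℝ)} {A : Set (ℝ × ℝ)} (hA : MeasurableSet A)
    {τ : ℝ × ℝ → ℝ × ℝ} (hτ : MeasurePreserving τ (ν.restrict A) ν) (f : Lp F 2 ν) :
    shiftL hA hτ f =ᵐ[ν] A.indicator (f ∘ τ) := MemLp.coeFn_toLp (shift_mem hA hτ f)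

theorem mp1 (t : ℝ≥0) : MeasurePreserving (fun r : ℝ => r - t) (mu0.restrict (Ici (t:ℝ))) mu0 := by
  have h := (measurePreserving_sub_right (volume : Measure ℝ) (t:ℝ)).restrict_preimage
    (s := Ici (0:ℝ)) measurableSet_Ici
  unfold mu0
  rw [Measure.restrict_restrict measurableSet_Ici, Ici_inter_Ici, sup_eq_left.2 (NNReal.coe_nonneg t)]
  have e : Ici (t:ℝ) = (fun x : ℝ => x - t) ⁻¹' Ici 0 := by ext r; simp
  rw [e]
  exact h

theorem A1_meas (t : ℝ≥0) : MeasurableSet {p : ℝ × ℝ | (t:ℝ) ≤ p.1} :=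
  measurableSet_le measurable_const measurable_fst
theorem A2_meas (t : ℝ≥0) : MeasurableSet {p : ℝ × ℝ | (t:ℝ) ≤ p.2} :=
  measurableSet_le measurable_const measurable_snd

theorem mpS1 (t : ℝ≥0) : MeasurePreserving (fun p : ℝ × ℝ => (p.1 - (t:ℝ), p.2))
    (nuQ.restrict {p : ℝ × ℝ | (t:ℝ) ≤ p.1}) nuQ := by
  have h := (mp1 t).prod (MeasurePreserving.id mu0)
  have e : nuQ.restrict {p : ℝ × ℝ | (t:ℝ) ≤ p.1} = (mu0.restrict (Ici (t:ℝ))).prod mu0 := by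
    conv_rhs => rw [← Measure.restrict_univ (μ := mu0)]
    rw [Measure.restrict_univ, ← Measure.restrict_univ (μ := mu0), Measure.restrict_univ,
      nuQ_eq]
    rw [show {p : ℝ × ℝ | (t:ℝ) ≤ p.1} = Ici (t:ℝ) ×ˢ univ by ext; simp, ← Measure.prod_restrict,
      Measure.restrict_univ]
  rw [e, nuQ_eq]
  exact h

theorem mpS2 (t : ℝ≥0) : MeasurePreserving (fun p : ℝ × ℝ => (p.1, p.2 - (t:ℝ)))
    (nuQ.restrict {p : ℝ × ℝ | (t:ℝ) ≤ p.2}) nuQ := by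
  have h := (MeasurePreserving.id mu0).prod (mp1 t)
  have e : nuQ.restrict {p : ℝ × ℝ | (t:ℝ) ≤ p.2} = mu0.prod (mu0.restrict (Ici (t:ℝ))) := by
    rw [nuQ_eq]
    rw [show {p : ℝ × ℝ | (t:ℝ) ≤ p.2} = univ ×ˢ Ici (t:ℝ) by ext; simp, ← Measure.prod_restrict,
      Measure.restrict_univ]
  rw [e, nuQ_eq]
  exact h

def S1 (t : ℝ≥0) : Lp F 2 nuQ →ₗᵢ[ℂ] Lp F 2 nuQ := shiftL (A1_meas t) (mpS1 t)
def S2 (t : ℝ≥0) : Lp F 2 nuQ →ₗᵢ[ℂ] Lp F 2 nuQ := shiftL (A2_meas t) (mpS2 t)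

theorem S1_coe (t : ℝ≥0) (f : Lp F 2 nuQ) : (S1 t f : ℝ × ℝ → F) =ᵐ[nuQ]
    fun p => if (t : ℝ) ≤ p.1 then (f : ℝ × ℝ → F) (p.1 - (t : ℝ), p.2) else 0 := by
  filter_upwards [shiftL_coe (A1_meas t) (mpS1 t) f] with p hp
  rw [S1, hp]; simp [indicator_apply]

theorem S2_coe (t : ℝ≥0) (f : Lp F 2 nuQ) : (S2 t f : ℝ × ℝ → F) =ᵐ[nuQ]
    fun p => if (t : ℝ) ≤ p.2 then (f : ℝ × ℝ → F) (p.1, p.2 - (t : ℝ)) else 0 := by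
  filter_upwards [shiftL_coe (A2_meas t) (mpS2 t) f] with p hp
  rw [S2, hp]; simp [indicator_apply]

theorem kap_shift (s t r : ℝ) : kap s (r - t) = kap (s + t) r := by
  unfold kap
  simp only [le_sub_iff_add_le]
  congr 3; ring

theorem S1_bvec (t s u : ℝ≥0) (w : F) : S1 t (bvec s u w) = bvec (s + t : ℝ≥0) u w := by
  apply Lp.ext
  have h := (ae_restrict_iff' (A1_meas t)).1
    ((mpS1 t).quasiMeasurePreserving.ae_eq_comp (bvec_coe (s:ℝ) u w))
  filter_upwards [S1_coe t (bvec (s:ℝ) u w), bvec_coe ((s + t : ℝ≥0):ℝ) u w, h] with p h1 h2 h3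
  rw [h1, h2]
  by_cases hp : (t:ℝ) ≤ p.1
  · rw [if_pos hp]
    have := h3 hp
    simp only [Function.comp] at this
    rw [this]
    simp only [kf, kap_shift, NNReal.coe_add]
  · rw [if_neg hp]
    have : ¬ ((s:ℝ) + t ≤ p.1) := by have := s.2; intro h; apply hp; linarith [NNReal.coe_nonneg s]
    simp [kf, kap, this]

theorem S2_bvec (t s u : ℝ≥0) (w : F) : S2 t (bvec s u w) = bvec s (u + t : ℝ≥0) w := by
  apply Lp.ext
  have h := (ae_restrict_iff' (A2_meas t)).1
    ((mpS2 t).quasiMeasurePreserving.ae_eq_comp (bvec_coe (s:ℝ) u w))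
  filter_upwards [S2_coe t (bvec (s:ℝ) u w), bvec_coe s ((u + t : ℝ≥0):ℝ) w, h] with p h1 h2 h3
  rw [h1, h2]
  by_cases hp : (t:ℝ) ≤ p.2
  · rw [if_pos hp]
    have := h3 hp
    simp only [Function.comp] at this
    rw [this]
    simp only [kf, kap_shift, NNReal.coe_add]
  · rw [if_neg hp]
    have : ¬ ((u:ℝ) + t ≤ p.2) := by intro h; apply hp; linarith [NNReal.coe_nonneg u]
    simp [kf, kap, this]

end Shift

section Backward

open Set Filter Topology

variable {G : Type} [NormedAddCommGroup G] [InnerProductSpace ℂ G] [CompleteSpace G]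

theorem num_lemma (s s' q : ℝ≥0) : Real.exp (-|(((s' + q : ℝ≥0) : ℝ)) - s|) =
    Real.exp (-((q - s : ℝ≥0) : ℝ)) * Real.exp (-|(s' : ℝ) - ((s - q : ℝ≥0) : ℝ)|) := by
  rw [← Real.exp_add]
  congr 1
  push_cast
  rcases le_total s q with h | h
  · have h' : (s:ℝ) ≤ q := h
    rw [tsub_eq_zero_of_le h, NNReal.coe_sub h]
    have : (0:ℝ) ≤ s' := s'.2
    rw [NNReal.coe_zero, sub_zero, abs_of_nonneg this, abs_of_nonneg (by linarith)]
    ring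
  · rw [tsub_eq_zero_of_le h, NNReal.coe_sub h, NNReal.coe_zero, neg_zero, zero_add]
    congr 2; ring

theorem adj_formula {κ : Type} {V : ℝ≥0 → G →L[ℂ] G} (a : ℝ≥0 → κ → G) (M : κ → κ → ℂ)
    (hgram : ∀ s s' k k', ⟪a s k, a s' k'⟫_ℂ = ((Real.exp (-|(s:ℝ) - s'|) : ℝ) : ℂ) * M k k')
    (hV : ∀ r s k, V r (a s k) = a (s + r) k)
    (htot : ∀ x, (∀ s k, ⟪a s k, x⟫_ℂ = 0) → x = 0) (q s : ℝ≥0) (k : κ) :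
    adjoint (V q) (a s k) = ((Real.exp (-((q - s : ℝ≥0) : ℝ)) : ℝ) : ℂ) • a (s - q) k := by
  rw [← sub_eq_zero]
  apply htot
  intro s' k'
  rw [inner_sub_right, adjoint_inner_right, hV, inner_smul_right, hgram, hgram, num_lemma]
  push_cast
  ring

theorem cnu_of_frame {κ : Type} {V : ℝ≥0 → G →L[ℂ] G} (hi : IsIsometrySemigroup V)
    (a : ℝ≥0 → κ → G) (M : κ → κ → ℂ)
    (hgram : ∀ s s' k k', ⟪a s k, a s' k'⟫_ℂ = ((Real.exp (-|(s:ℝ) - s'|) : ℝ) : ℂ) * M k k')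
    (hV : ∀ r s k, V r (a s k) = a (s + r) k)
    (htot : ∀ x, (∀ s k, ⟪a s k, x⟫_ℂ = 0) → x = 0) : IsCnu V := by
  intro L _ _ _ hu
  rw [Submodule.eq_bot_iff]
  intro x hx
  apply htot
  intro s k
  have bound : ∀ r : ℝ≥0, ‖⟪a s k, x⟫_ℂ‖ ≤ Real.exp (-(r:ℝ)) * (‖a 0 k‖ * ‖x‖) := by
    intro r
    obtain ⟨y, hy, hyx⟩ := (hu (s + r)).2.2 x hx
    have e : ⟪a s k, x⟫_ℂ = ⟪adjoint (V (s + r)) (a s k), y⟫_ℂ := by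
      rw [adjoint_inner_left, hyx]
    have hyn : ‖y‖ = ‖x‖ := by rw [← hyx, hi.2]
    rw [e, adj_formula a M hgram hV htot]
    refine (norm_inner_le_norm _ _).trans ?_
    rw [norm_smul, hyn, Complex.norm_real, Real.norm_eq_abs, abs_of_pos (Real.exp_pos _), mul_assoc,
      tsub_eq_zero_of_le (le_self_add : s ≤ s + r), add_tsub_cancel_left]
  have lim : Tendsto (fun n : ℕ => Real.exp (-((n : ℝ≥0):ℝ)) * (‖a 0 k‖ * ‖x‖)) atTop (𝓝 0) := by
    have := (Real.tendsto_exp_neg_atTop_nhds_zero.comp tendsto_natCast_atTop_atTop).mul_const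
      (‖a 0 k‖ * ‖x‖)
    simpa [Function.comp_def] using this
  have := ge_of_tendsto' lim (fun n => bound n)
  exact norm_le_zero_iff.1 this

theorem backward (V1 V2 : ℝ≥0 → G →L[ℂ] G) (h1 : IsC0Semigroup V1) (h2 : IsC0Semigroup V2)
    (hb : IsBishiftPair V1 V2) : IsIsometrySemigroup V1 ∧ IsIsometrySemigroup V2 ∧
      SgDoublyCommute V1 V2 ∧ IsCnu V1 ∧ IsCnu V2 := by
  obtain ⟨F, _, _, _, Z, hZ⟩ := hb
  have z1 : ∀ t x, Z (V1 t x) = S1 t (Z x) := fun t x =>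
    Lp.ext ((hZ t x).1.trans (S1_coe t (Z x)).symm)
  have z2 : ∀ t x, Z (V2 t x) = S2 t (Z x) := fun t x =>
    Lp.ext ((hZ t x).2.trans (S2_coe t (Z x)).symm)
  have i1 : IsIsometrySemigroup V1 := ⟨h1, fun t x => by
    rw [← Z.norm_map, z1, (S1 t).norm_map, Z.norm_map]⟩
  have i2 : IsIsometrySemigroup V2 := ⟨h2, fun t x => by
    rw [← Z.norm_map, z2, (S2 t).norm_map, Z.norm_map]⟩
  let a : ℝ≥0 → ℝ≥0 → F → G := fun s t w => Z.symm (bvec s t w)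
  have v1 : ∀ r s t w, V1 r (a s t w) = a (s + r) t w := by
    intro r s t w
    apply Z.injective
    rw [z1]; simp only [a, LinearIsometryEquiv.apply_symm_apply]; rw [S1_bvec]
  have v2 : ∀ r s t w, V2 r (a s t w) = a s (t + r) w := by
    intro r s t w
    apply Z.injective
    rw [z2]; simp only [a, LinearIsometryEquiv.apply_symm_apply]; rw [S2_bvec]
  have gram : ∀ s t w s' t' w', ⟪a s t w, a s' t' w'⟫_ℂ =
      ((Real.exp (-|(s:ℝ) - s'|) * Real.exp (-|(t:ℝ) - t'|) : ℝ) : ℂ) * ⟪w, w'⟫_ℂ := by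
    intro s t w s' t' w'
    simp only [a, LinearIsometryEquiv.inner_map_map]
    exact bvec_gram _ _ (NNReal.coe_nonneg s) (NNReal.coe_nonneg t) w w'
  have tot : ∀ x, (∀ s t w, ⟪a s t w, x⟫_ℂ = 0) → x = 0 := by
    intro x hx
    apply Z.injective
    rw [map_zero]
    apply bvec_total
    intro s t hs ht w
    have := hx ⟨s, hs⟩ ⟨t, ht⟩ w
    rw [← Z.inner_map_map] at this
    simp only [a, LinearIsometryEquiv.apply_symm_apply] at this
    exact this
  let a1 : ℝ≥0 → ℝ≥0 × F → G := fun s k => a s k.1 k.2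
  let a2 : ℝ≥0 → ℝ≥0 × F → G := fun t k => a k.1 t k.2
  let M : ℝ≥0 × F → ℝ≥0 × F → ℂ := fun k k' =>
    ((Real.exp (-|(k.1:ℝ) - k'.1|) : ℝ) : ℂ) * ⟪k.2, k'.2⟫_ℂ
  have g1 : ∀ s s' k k', ⟪a1 s k, a1 s' k'⟫_ℂ = ((Real.exp (-|(s:ℝ) - s'|) : ℝ) : ℂ) * M k k' := by
    intro s s' k k'
    simp only [a1, M, gram]; push_cast; ring
  have g2 : ∀ s s' k k', ⟪a2 s k, a2 s' k'⟫_ℂ = ((Real.exp (-|(s:ℝ) - s'|) : ℝ) : ℂ) * M k k' := by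
    intro s s' k k'
    simp only [a2, M, gram]; push_cast; ring
  have t1 : ∀ x, (∀ s k, ⟪a1 s k, x⟫_ℂ = 0) → x = 0 :=
    fun x hx => tot x (fun s t w => hx s (t, w))
  have t2 : ∀ x, (∀ s k, ⟪a2 s k, x⟫_ℂ = 0) → x = 0 :=
    fun x hx => tot x (fun s t w => hx t (s, w))
  have w1 : ∀ r s k, V1 r (a1 s k) = a1 (s + r) k := fun r s k => v1 r s k.1 k.2
  have w2 : ∀ r s k, V2 r (a2 s k) = a2 (s + r) k := fun r s k => v2 r k.1 s k.2
  have ad2 : ∀ q s t w, adjoint (V2 q) (a s t w) =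
      ((Real.exp (-((q - t : ℝ≥0) : ℝ)) : ℝ) : ℂ) • a s (t - q) w :=
    fun q s t w => adj_formula a2 M g2 w2 t2 q t (s, w)
  let ai : ℝ≥0 × ℝ≥0 × F → G := fun i => a i.1 i.2.1 i.2.2
  have ti : ∀ x, (∀ i, ⟪ai i, x⟫_ℂ = 0) → x = 0 := fun x hx => tot x (fun s t w => hx (s, t, w))
  refine ⟨i1, i2, ⟨?_, ?_⟩, cnu_of_frame i1 a1 M g1 w1 t1, cnu_of_frame i2 a2 M g2 w2 t2⟩
  · intro t s
    apply clm_eq_of_total ai ti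
    intro i
    simp only [ai, comp_apply, v1, v2]
  · intro t s
    apply clm_eq_of_total ai ti
    intro i
    simp only [ai, comp_apply, v1, ad2, map_smul]

end Backward

section Forward

open Set Filter Topology

variable {G : Type} [NormedAddCommGroup G] [InnerProductSpace ℂ G] [CompleteSpace G]

def WW (V1 V2 : ℝ≥0 → G →L[ℂ] G) : Submodule ℂ G where
  carrier := {w | ∀ t : ℝ≥0, adjoint (V1 t) w = Real.exp (-t) • w ∧
    adjoint (V2 t) w = Real.exp (-t) • w}
  add_mem' := by intro a b ha hb t; simp [ha t, hb t]
  zero_mem' := by intro t; simp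
  smul_mem' := by
    intro c x hx t
    rw [map_smul, map_smul, (hx t).1, (hx t).2, smul_comm]
    exact ⟨rfl, rfl⟩

theorem WW_closed (V1 V2 : ℝ≥0 → G →L[ℂ] G) : IsClosed (WW V1 V2 : Set G) := by
  have : (WW V1 V2 : Set G) = ⋂ t : ℝ≥0, ({w | adjoint (V1 t) w = Real.exp (-t) • w} ∩
    {w | adjoint (V2 t) w = Real.exp (-t) • w}) := by
    ext x; simp only [mem_iInter]; rfl
  rw [this]
  exact isClosed_iInter fun t => (isClosed_eq (by fun_prop) (by fun_prop)).inter
    (isClosed_eq (by fun_prop) (by fun_prop))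

theorem eig_gram_le {V : ℝ≥0 → G →L[ℂ] G} (h : IsIsometrySemigroup V) (x y : G)
    (hx : ∀ t : ℝ≥0, adjoint (V t) x = Real.exp (-t) • x) (s r : ℝ≥0) :
    ⟪V s x, V (s + r) y⟫_ℂ = ((Real.exp (-r) : ℝ) : ℂ) * ⟪x, y⟫_ℂ := by
  rw [sg_apply h, ← adjoint_inner_left, iso_adj h, ← adjoint_inner_left, hx,
    inner_smul_left_eq_smul, Complex.real_smul]

theorem eig_gram {V : ℝ≥0 → G →L[ℂ] G} (h : IsIsometrySemigroup V) (x y : G)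
    (hx : ∀ t : ℝ≥0, adjoint (V t) x = Real.exp (-t) • x)
    (hy : ∀ t : ℝ≥0, adjoint (V t) y = Real.exp (-t) • y) (s s' : ℝ≥0) :
    ⟪V s x, V s' y⟫_ℂ = ((Real.exp (-|(s:ℝ) - s'|) : ℝ) : ℂ) * ⟪x, y⟫_ℂ := by
  rcases le_total s s' with hs | hs
  · obtain ⟨r, rfl⟩ := exists_add_of_le hs
    rw [eig_gram_le h x y hx]
    simp
  · obtain ⟨r, rfl⟩ := exists_add_of_le hs
    rw [← inner_conj_symm, eig_gram_le h y x hy, map_mul, inner_conj_symm, Complex.conj_ofReal]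
    simp

theorem forward (V1 V2 : ℝ≥0 → G →L[ℂ] G) (i1 : IsIsometrySemigroup V1)
    (i2 : IsIsometrySemigroup V2) (hd : SgDoublyCommute V1 V2) (c1 : IsCnu V1) (c2 : IsCnu V2) :
    IsBishiftPair V1 V2 := by
  have k1 : ∀ t s x, V1 t (V2 s x) = V2 s (V1 t x) := fun t s x =>
    congrArg (fun T => T x) (hd.1 t s)
  have k2 : ∀ t s x, V1 t (adjoint (V2 s) x) = adjoint (V2 s) (V1 t x) := fun t s x =>
    congrArg (fun T => T x) (hd.2 t s)
  have k3 : ∀ t s x, V2 s (adjoint (V1 t) x) = adjoint (V1 t) (V2 s x) := by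
    intro t s x
    have := congrArg adjoint (hd.2 t s)
    rw [adjoint_comp, adjoint_comp, adjoint_adjoint] at this
    exact congrArg (fun T => T x) this
  have k4 : ∀ t s x, adjoint (V2 s) (adjoint (V1 t) x) = adjoint (V1 t) (adjoint (V2 s) x) := by
    intro t s x
    have := congrArg adjoint (hd.1 t s)
    rw [adjoint_comp, adjoint_comp] at this
    exact congrArg (fun T => T x) this
  -- the adjoint of V2 commutes with the projection of V1
  have q1 : ∀ s x, adjoint (V2 s) (QV i1 x) = QV i1 (adjoint (V2 s) x) := fun s x =>
    QV_comm i1 _ (fun t x => (k2 t s x).symm) (fun t x => k4 t s x) x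
  have : CompleteSpace (WW V1 V2) := (WW_closed V1 V2).completeSpace_coe
  have hW : ∀ y, QV i1 (QV i2 y) ∈ WW V1 V2 := by
    intro y t
    refine ⟨QV_eig i1 _ t, ?_⟩
    rw [q1, QV_eig i2, ContinuousLinearMap.map_smul_of_tower]
  let a : ℝ≥0 × ℝ≥0 × WW V1 V2 → G := fun i => V1 i.1 (V2 i.2.1 (i.2.2 : G))
  let b : ℝ≥0 × ℝ≥0 × WW V1 V2 → Lp (WW V1 V2) 2 nuQ := fun i => bvec i.1 i.2.1 i.2.2
  have e1 : ∀ (w : WW V1 V2) (u t : ℝ≥0), adjoint (V1 t) (V2 u (w : G)) =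
      Real.exp (-t) • V2 u (w : G) := by
    intro w u t
    rw [← k3, (w.2 t).1, ContinuousLinearMap.map_smul_of_tower]
  have hab : ∀ i j, ⟪a i, a j⟫_ℂ = ⟪b i, b j⟫_ℂ := by
    rintro ⟨s, t, w⟩ ⟨s', t', w'⟩
    simp only [a, b]
    rw [bvec_gram _ _ (NNReal.coe_nonneg s) (NNReal.coe_nonneg t), eig_gram i1 _ _ (e1 w t) (e1 w' t'),
      eig_gram i2 _ _ (fun r => (w.2 r).2) (fun r => (w'.2 r).2), Submodule.coe_inner]
    push_cast
    ring
  have ha : ∀ x, (∀ i, ⟪a i, x⟫_ℂ = 0) → x = 0 := by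
    intro x hx
    apply QV_total i1 c1
    intro s
    apply QV_total i2 c2
    intro t
    apply ext_inner_left ℂ
    intro y
    have := hx (s, t, ⟨_, hW y⟩)
    simp only [a] at this
    rw [← adjoint_inner_right, ← adjoint_inner_right, QV_symm, QV_symm, ← q1] at this
    rw [inner_zero_right, this]
  have hb : ∀ x, (∀ i, ⟪b i, x⟫_ℂ = 0) → x = 0 := by
    intro x hx
    apply bvec_total
    intro s t hs ht w
    exact hx (⟨s, hs⟩, ⟨t, ht⟩, w)
  obtain ⟨Z, hZ⟩ := gram_unitary a b hab ha hb
  have z1 : ∀ r x, Z (V1 r x) = S1 r (Z x) := by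
    intro r x
    have : (Z.toContinuousLinearEquiv : G →L[ℂ] Lp (WW V1 V2) 2 nuQ) ∘L V1 r =
        (S1 r).toContinuousLinearMap ∘L (Z.toContinuousLinearEquiv : G →L[ℂ] Lp (WW V1 V2) 2 nuQ) := by
      apply clm_eq_of_total a ha
      rintro ⟨s, t, w⟩
      change Z (V1 r (a (s, t, w))) = S1 r (Z (a (s, t, w)))
      rw [hZ]
      have : V1 r (a (s, t, w)) = a (s + r, t, w) := by
        simp only [a]; rw [add_comm, sg_apply i1]
      rw [this, hZ]
      exact (S1_bvec r s t w).symm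
    exact congrArg (fun T => T x) this
  have z2 : ∀ r x, Z (V2 r x) = S2 r (Z x) := by
    intro r x
    have : (Z.toContinuousLinearEquiv : G →L[ℂ] Lp (WW V1 V2) 2 nuQ) ∘L V2 r =
        (S2 r).toContinuousLinearMap ∘L (Z.toContinuousLinearEquiv : G →L[ℂ] Lp (WW V1 V2) 2 nuQ) := by
      apply clm_eq_of_total a ha
      rintro ⟨s, t, w⟩
      change Z (V2 r (a (s, t, w))) = S2 r (Z (a (s, t, w)))
      rw [hZ]
      have : V2 r (a (s, t, w)) = a (s, t + r, w) := by
        simp only [a]; rw [add_comm, sg_apply i2, k1 s r]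
      rw [this, hZ]
      exact (S2_bvec r s t w).symm
    exact congrArg (fun T => T x) this
  refine ⟨WW V1 V2, inferInstance, inferInstance, inferInstance, Z, fun t x => ⟨?_, ?_⟩⟩
  · rw [z1]; exact S1_coe t (Z x)
  · rw [z2]; exact S2_coe t (Z x)

end Forward

/-- Two C₀-semigroups are doubly commuting completely nonunitary semigroups of isometries
if and only if the pair is a bishift-semigroup. -/
theorem doubly_commuting_cnu_iff_bishift {H : Type} [NormedAddCommGroup H]
    [InnerProductSpace ℂ H] [CompleteSpace H] (V1 V2 : ℝ≥0 → H →L[ℂ] H)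
    (h1 : IsC0Semigroup V1) (h2 : IsC0Semigroup V2) :
    (IsIsometrySemigroup V1 ∧ IsIsometrySemigroup V2 ∧ SgDoublyCommute V1 V2 ∧
      IsCnu V1 ∧ IsCnu V2) ↔ IsBishiftPair V1 V2 := by
  exact ⟨fun ⟨i1, i2, hd, c1, c2⟩ => forward V1 V2 i1 i2 hd c1 c2, fun hb => backward V1 V2 h1 h2 hb⟩
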